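/- Let X be a connected chordal bipartite T_2-free graph, let α be a vertex of X, and let (Ω,S) be a coherent configuration on the vertex set Ω of X compatible with X in which α is distinguished. Let Δ, Γ, Λ be pairwise distinct fibers of (Ω,S) such that at least one edge of X joins Δ to Γ, and such that e_{Δ,Γ} is strictly contained in e_{Δ,Λ}. Then ‖e_{Δ,Γ}‖ = 2·‖e_{Δ,Λ}‖. -/

import Mathlib

open SimpleGraph

/-- A coherent configuration on a set `Ω`: a partition `S` of `Ω × Ω` into nonempty
binary relations such that the diagonal is a union of elements of `S`, the converse of
every element of `S` belongs to `S`, and the intersection numbers are well defined. -/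
structure CoherentConfiguration (Ω : Type*) where
  S : Set (Set (Ω × Ω))
  nonempty_mem : ∀ s ∈ S, s.Nonempty
  partition : ∀ p : Ω × Ω, ∃! s, s ∈ S ∧ p ∈ s
  diag_union : ∀ s ∈ S, (∃ p ∈ s, p.1 = p.2) → ∀ p ∈ s, p.1 = p.2
  converse_mem : ∀ s ∈ S, {p : Ω × Ω | (p.2, p.1) ∈ s} ∈ S
  regularity : ∀ r ∈ S, ∀ s ∈ S, ∀ t ∈ S, ∀ p ∈ t, ∀ q ∈ t,
    {γ : Ω | (p.1, γ) ∈ r ∧ (γ, p.2) ∈ s}.ncard =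
      {γ : Ω | (q.1, γ) ∈ r ∧ (γ, q.2) ∈ s}.ncard

/-- `Δ` is a fiber of the coherent configuration, i.e. `{(δ,δ) : δ ∈ Δ} ∈ S`. -/
def CoherentConfiguration.IsFiber {Ω : Type*} (C : CoherentConfiguration Ω)
    (Δ : Set Ω) : Prop :=
  {p : Ω × Ω | p.1 = p.2 ∧ p.1 ∈ Δ} ∈ C.S

/-- The coherent configuration is compatible with the graph `X`: the arc set of `X`
is a union of elements of `S`. -/
def CoherentConfiguration.Compatible {Ω : Type*} (C : CoherentConfiguration Ω)
    (X : SimpleGraph Ω) : Prop :=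
  ∀ s ∈ C.S, (∃ p ∈ s, X.Adj p.1 p.2) → ∀ p ∈ s, X.Adj p.1 p.2

/-- The vertex `α` is distinguished in the coherent configuration: `{(α,α)} ∈ S`. -/
def CoherentConfiguration.Distinguished {Ω : Type*} (C : CoherentConfiguration Ω)
    (α : Ω) : Prop :=
  ({(α, α)} : Set (Ω × Ω)) ∈ C.S

/-- `P`, `Q` form a bipartition of the graph `X`. -/
def IsBipartition {V : Type*} (X : SimpleGraph V) (P Q : Set V) : Prop :=
  (∀ v, v ∈ P ∨ v ∈ Q) ∧ Disjoint P Q ∧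
    ∀ u v, X.Adj u v → (u ∈ P ∧ v ∈ Q) ∨ (u ∈ Q ∧ v ∈ P)

/-- `X` contains no induced cycle of length at least 6. -/
def NoLongInducedCycle {V : Type*} (X : SimpleGraph V) : Prop :=
  ∀ n : ℕ, 6 ≤ n → IsEmpty (SimpleGraph.cycleGraph n ↪g X)

/-- The equivalence relation `e_{Δ,Γ}` on `Δ`: two vertices of `Δ` are equivalent iff
they have the same neighbors in `Γ`; viewed as a set of pairs. -/
def eRel {V : Type*} (X : SimpleGraph V) (Δ Γ : Set V) : Set (V × V) :=
  {p | p.1 ∈ Δ ∧ p.2 ∈ Δ ∧ X.neighborSet p.1 ∩ Γ = X.neighborSet p.2 ∩ Γ}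

/-- The number `‖e_{Δ,Γ}‖` of classes of the equivalence relation `e_{Δ,Γ}`,
i.e. the number of distinct sets of the form `N(δ) ∩ Γ` for `δ ∈ Δ`. -/
noncomputable def numClasses {V : Type*} (X : SimpleGraph V) (Δ Γ : Set V) : ℕ :=
  ((fun δ => X.neighborSet δ ∩ Γ) '' Δ).ncard

/-- The bipartite claw `T₂`: the tree on 7 vertices obtained from the star `K_{1,3}`
by subdividing each edge once (center 0, middle vertices 1,2,3, leaves 4,5,6). -/
def bipartiteClaw : SimpleGraph (Fin 7) :=
  SimpleGraph.fromRel (fun a b =>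
    (a, b) ∈ ({(0, 1), (0, 2), (0, 3), (1, 4), (2, 5), (3, 6)} : Set (Fin 7 × Fin 7)))

/-- `X` contains no induced subgraph isomorphic to the bipartite claw `T₂`. -/
def T2Free {V : Type*} (X : SimpleGraph V) : Prop :=
  IsEmpty (bipartiteClaw ↪g X)

/-! For two adjacent fibers `Δ`, `Γ`, the graph `X[Δ ∪ Γ]` is biregular. In a finite chordal
bipartite graph in which vertices with a common neighbor have equal degrees, an induced path on four
vertices could be prolonged forever, so `X[Δ ∪ Γ]` is a disjoint union of complete bipartite graphs,
and its components correspond to the classes of `e_{Δ,Γ}`. Three components would give an induced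
matching of size three between two consecutive distance layers around `α`. Such a matching descends
one layer towards `α`, since otherwise the next layer provides the center of a bipartite claw; at
`α` itself it cannot exist. Hence `‖e_{Δ,Γ}‖ ≤ 2`, and a strict coarsening has one class. -/

section Bipartite

variable {V : Type*} {X : SimpleGraph V}

/-- The proper coloring of a bipartite graph which marks the vertices of the first part. -/
noncomputable def IsBipartition.coloring {P Q : Set V} (h : IsBipartition X P Q) :
    X.Coloring Bool :=
  haveI := Classical.decPred (· ∈ P)
  Coloring.mk (fun v => decide (v ∈ P)) fun {u v} huv => by
    have hdisj := Set.disjoint_left.1 h.2.1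
    grind [h.2.2 u v huv]

theorem coloring_eq_of_adj_of_adj (c : X.Coloring Bool) {u v w : V} (huw : X.Adj u w)
    (hvw : X.Adj v w) : c u = c v :=
  (Bool.eq_not.2 (c.valid huw)).trans (Bool.eq_not.2 (c.valid hvw)).symm

theorem exists_adj_dist_eq_of_dist_eq_add_one (hconn : X.Connected) {α v : V} {n : ℕ}
    (h : X.dist α v = n + 1) : ∃ u, X.Adj v u ∧ X.dist α u = n := by
  obtain ⟨p, hp⟩ := hconn.exists_walk_length_eq_dist v α
  rw [dist_comm, h] at hp
  cases p with
  | nil => simp at hp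
  | @cons _ u _ hvu q =>
    refine ⟨u, hvu, ?_⟩
    have hle : X.dist u α ≤ n := by
      rw [Walk.length_cons, Nat.add_right_cancel_iff] at hp
      exact hp ▸ dist_le q
    rw [dist_comm] at hle
    have := hvu.diff_dist_adj (u := α)
    omega

theorem dist_eq_dist_add_one_of_adj (c : X.Coloring Bool) (hconn : X.Connected) (α : V) {u v : V}
    (huv : X.Adj u v) : X.dist α v = X.dist α u + 1 ∨ X.dist α u = X.dist α v + 1 := by
  have hne : X.dist α u ≠ X.dist α v := fun heq => by
    obtain ⟨p, hp⟩ := hconn.exists_walk_length_eq_dist α u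
    obtain ⟨q, hq⟩ := hconn.exists_walk_length_eq_dist α v
    have hp' := c.even_length_iff_congr p
    have hq' := c.even_length_iff_congr q
    rw [hp, heq, ← hq] at hp'
    grind [c.valid huv]
  have := huv.diff_dist_adj (u := α)
  omega

theorem exists_adj_adj_of_dist_eq (hconn : X.Connected) {α t x : V}
    (h : X.dist α x = X.dist α t) (hne : x ≠ t) :
    ∃ z l, X.Adj t z ∧ X.Adj z l ∧ X.dist α z < X.dist α t ∧
      (l = x ∨ X.dist α l + 1 < X.dist α t) := by
  obtain ⟨n, hn⟩ : ∃ n, X.dist α t = n + 1 := Nat.exists_eq_add_one_of_ne_zero fun h0 =>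
    hne ((hconn.dist_eq_zero_iff.1 (h.trans h0)).symm.trans (hconn.dist_eq_zero_iff.1 h0))
  obtain ⟨z, htz, hz⟩ := exists_adj_dist_eq_of_dist_eq_add_one hconn hn
  cases n with
  | zero =>
    obtain rfl := hconn.dist_eq_zero_iff.1 hz
    exact ⟨α, x, htz, dist_eq_one_iff_adj.1 (h.trans hn), by omega, .inl rfl⟩
  | succ n =>
    obtain ⟨l, hzl, hl⟩ := exists_adj_dist_eq_of_dist_eq_add_one hconn hz
    exact ⟨z, l, htz, hzl, by omega, .inr (by omega)⟩

end Bipartite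

theorem nonempty_embedding_of_adj_iff {V W : Type*} {X : SimpleGraph V} {G : SimpleGraph W}
    (hG : ∀ i j, (∀ k, G.Adj i k ↔ G.Adj j k) → i = j) {f : W → V}
    (hf : ∀ i j, X.Adj (f i) (f j) ↔ G.Adj i j) : Nonempty (G ↪g X) :=
  ⟨⟨f, fun i j hij => hG i j fun k => by rw [← hf, ← hf, hij]⟩, hf _ _⟩

section Claw

variable {V : Type*} {X : SimpleGraph V}

theorem bipartiteClaw_adj {i j : Fin 7} : bipartiteClaw.Adj i j ↔
    (i, j) ∈ ([(0, 1), (0, 2), (0, 3), (1, 4), (2, 5), (3, 6)] : List (Fin 7 × Fin 7)) ∨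
      (j, i) ∈ ([(0, 1), (0, 2), (0, 3), (1, 4), (2, 5), (3, 6)] : List (Fin 7 × Fin 7)) := by
  fin_cases i <;> fin_cases j <;> simp [bipartiteClaw]

instance : DecidableRel bipartiteClaw.Adj := fun _ _ => decidable_of_iff _ bipartiteClaw_adj.symm

theorem eq_of_forall_bipartiteClaw_adj_iff :
    ∀ i j, (∀ k, bipartiteClaw.Adj i k ↔ bipartiteClaw.Adj j k) → i = j := by
  decide

theorem T2Free.exists_not_adj (hT2 : T2Free X) (c : X.Coloring Bool) {a b : Fin 3 → V}
    (hab : ∀ i j, X.Adj (a i) (b j) ↔ i = j) (z : V) : ∃ i, ¬ X.Adj z (a i) := by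
  by_contra! hza
  have hcb : ∀ i, c (b i) = c z := fun i =>
    coloring_eq_of_adj_of_adj c ((hab i i).2 rfl).symm (hza i)
  have hsame : ∀ {u v}, c u = c v → ¬ X.Adj u v := fun h huv => c.valid huv h
  have haa : ∀ i j, ¬ X.Adj (a i) (a j) := fun i j => hsame
    (coloring_eq_of_adj_of_adj c (hza i).symm (hza j).symm)
  have hbb : ∀ i j, ¬ X.Adj (b i) (b j) := fun i j => hsame ((hcb i).trans (hcb j).symm)
  have hzb : ∀ i, ¬ X.Adj z (b i) := fun i => hsame (hcb i).symm
  have haz : ∀ i, X.Adj (a i) z := fun i => (hza i).symm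
  have hbz : ∀ i, ¬ X.Adj (b i) z := fun i => hsame (hcb i)
  have hba : ∀ i j, X.Adj (b i) (a j) ↔ i = j := fun i j => by rw [X.adj_comm, hab, eq_comm]
  let f : Fin 7 → V := ![z, a 0, a 1, a 2, b 0, b 1, b 2]
  have hf : ∀ i j, X.Adj (f i) (f j) ↔ bipartiteClaw.Adj i j := fun i j => by
    fin_cases i <;> fin_cases j <;>
      simp [f, bipartiteClaw_adj, hza, hab, haz, hba, haa, hbb, hzb, hbz]
  exact (nonempty_embedding_of_adj_iff eq_of_forall_bipartiteClaw_adj_iff hf).elim hT2.false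

/- Were `x` adjacent to neither `y₁` nor `y₂`, then `t`, with the arms `y₁, g₁`, `y₂, g₂` and a
third arm below `t`, would span a bipartite claw. -/
theorem T2Free.adj_or_adj_of_dist_eq (hT2 : T2Free X) (c : X.Coloring Bool) (hconn : X.Connected)
    {α t x y₁ y₂ g₁ g₂ : V} (hx : X.dist α x = X.dist α t)
    (hg₁ : X.dist α g₁ = X.dist α t + 2) (hg₂ : X.dist α g₂ = X.dist α t + 2)
    (hty₁ : X.Adj t y₁) (hty₂ : X.Adj t y₂) (hyg₁ : X.Adj y₁ g₁) (hyg₂ : X.Adj y₂ g₂)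
    (hyg₁₂ : ¬ X.Adj y₁ g₂) (hyg₂₁ : ¬ X.Adj y₂ g₁) : X.Adj x y₁ ∨ X.Adj x y₂ := by
  by_contra! hxy
  obtain ⟨z, l, htz, hzl, hz, hl⟩ := exists_adj_adj_of_dist_eq hconn hx
    (fun h => hxy.1 (h ▸ hty₁))
  have hlayer {u v : V} (huv : X.Adj u v) := dist_eq_dist_add_one_of_adj c hconn α huv
  have hzg {g : V} (hg : X.dist α g = X.dist α t + 2) : ¬ X.Adj z g := fun h => by
    grind [hlayer h]
  have hyl {y g : V} (hty : X.Adj t y) (hyg : X.Adj y g) (hg : X.dist α g = X.dist α t + 2)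
      (hxy : ¬ X.Adj x y) : ¬ X.Adj y l := fun h => by
    rcases hl with rfl | hl
    · exact hxy h.symm
    · grind [hlayer hty, hlayer hyg, hlayer h]
  have hmatch : ∀ i j, X.Adj (![y₁, y₂, z] i) (![g₁, g₂, l] j) ↔ i = j := fun i j => by
    fin_cases i <;> fin_cases j <;>
      simp [hyg₁, hyg₂, hyg₁₂, hyg₂₁, hzl, hzg hg₁, hzg hg₂, hyl hty₁ hyg₁ hg₁ hxy.1,
        hyl hty₂ hyg₂ hg₂ hxy.2]
  obtain ⟨i, hi⟩ := hT2.exists_not_adj c hmatch t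
  fin_cases i
  exacts [hi hty₁, hi hty₂, hi htz]

end Claw

section InducedPaths

variable {V : Type*} {X : SimpleGraph V}

theorem nonempty_embedding_of_comap_succ_eq {n : ℕ} {G : SimpleGraph (Fin n)}
    {H : SimpleGraph (Fin (n + 1))} (hGH : H.comap Fin.succ = G) (f : G ↪g X) {w : V}
    (hw : w ∉ Set.range f) (hadj : ∀ i, X.Adj w (f i) ↔ H.Adj 0 i.succ) :
    Nonempty (H ↪g X) := by
  subst hGH
  refine ⟨⟨⟨Fin.cons w f, Fin.cons_injective_iff.2 ⟨hw, f.injective⟩⟩, fun {i j} => ?_⟩⟩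
  cases i using Fin.cases <;> cases j using Fin.cases
  · simp
  · simp [hadj]
  · simp [X.adj_comm _ w, H.adj_comm _ 0, hadj]
  · simp

theorem comap_succ_pathGraph (n : ℕ) : (pathGraph (n + 1)).comap Fin.succ = pathGraph n := by
  ext i j
  simp only [comap_adj, pathGraph_adj, Fin.val_succ]
  omega

theorem cycleGraph_adj_iff_val {n : ℕ} {i j : Fin (n + 2)} : (cycleGraph (n + 2)).Adj i j ↔
    i.val = j.val + 1 ∨ j.val = i.val + 1 ∨
      i.val = 0 ∧ j.val = n + 1 ∨ j.val = 0 ∧ i.val = n + 1 := by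
  have hsub (a b : Fin (n + 2)) :
      (a - b).val = 1 ↔ a.val = b.val + 1 ∨ a.val = 0 ∧ b.val = n + 1 := by
    rcases le_or_gt b a with h | h
    · rw [Fin.sub_val_of_le h]
      omega
    · rw [Fin.coe_sub_iff_lt.2 h]
      omega
  rw [cycleGraph_adj', hsub, hsub]
  tauto

theorem comap_succ_cycleGraph (n : ℕ) :
    (cycleGraph (n + 2)).comap Fin.succ = pathGraph (n + 1) := by
  ext i j
  simp only [comap_adj, pathGraph_adj, cycleGraph_adj_iff_val, Fin.val_succ]
  omega

theorem cycleGraph_adj_zero_succ {n : ℕ} {i : Fin (n + 1)} :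
    (cycleGraph (n + 2)).Adj 0 i.succ ↔ i.val = 0 ∨ i.val = n := by
  simp only [cycleGraph_adj_iff_val, Fin.val_succ, Fin.coe_ofNat_eq_mod, Nat.zero_mod, true_and]
  omega

theorem NoLongInducedCycle.of_embedding {W : Type*} {Y : SimpleGraph W}
    (hch : NoLongInducedCycle X) (e : Y ↪g X) : NoLongInducedCycle Y :=
  fun n hn => ⟨fun f => (hch n hn).false (f.trans e)⟩

theorem four_le_val_of_adj_of_pathGraph_embedding (c : X.Coloring Bool) {n : ℕ}
    (f : pathGraph (n + 4) ↪g X) {w : V} (hw0 : X.Adj w (f 0)) (hw2 : ¬ X.Adj w (f 2))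
    {k : Fin (n + 4)} (hk : X.Adj w (f k)) (hk0 : k ≠ 0) : 4 ≤ k.val := by
  have hpath {i j : Fin (n + 4)} (h : i.val + 1 = j.val) : X.Adj (f i) (f j) :=
    f.map_rel_iff.2 (pathGraph_adj.2 (.inl h))
  have hck : c (f k) = c (f 0) := coloring_eq_of_adj_of_adj c hk.symm hw0.symm
  have hc02 : c (f 0) = c (f 2) :=
    coloring_eq_of_adj_of_adj c (w := f 1) (hpath rfl) (hpath rfl).symm
  have hk0' : k.val ≠ 0 := fun h => hk0 (Fin.ext h)
  have hk1 : k.val ≠ 1 := fun h => c.valid (hpath (i := 0) h.symm) hck.symm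
  have hk2 : k.val ≠ 2 := fun h => hw2 ((Fin.ext h : k = 2) ▸ hk)
  have hk3 : k.val ≠ 3 := fun h => c.valid (hpath (i := 2) h.symm) (hc02.symm.trans hck.symm)
  omega

/- The next neighbor of `w` along the path would close an induced cycle of length at least six. -/
theorem NoLongInducedCycle.adj_iff_eq_zero_of_pathGraph_embedding (hch : NoLongInducedCycle X)
    (c : X.Coloring Bool) {n : ℕ} (f : pathGraph (n + 4) ↪g X) {w : V} (hw : w ∉ Set.range f)
    (hw0 : X.Adj w (f 0)) (hw2 : ¬ X.Adj w (f 2)) (i : Fin (n + 4)) :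
    X.Adj w (f i) ↔ i = 0 := by
  refine ⟨fun hi => ?_, fun h => h ▸ hw0⟩
  by_contra hi0
  obtain ⟨k, ⟨hk, hk0⟩, hmin⟩ :=
    exists_minimal_of_wellFoundedLT (fun i => X.Adj w (f i) ∧ i ≠ 0) ⟨i, hi, hi0⟩
  have hk4 : 4 ≤ k.val := four_le_val_of_adj_of_pathGraph_embedding c f hw0 hw2 hk hk0
  let g : pathGraph (k.val + 1) ↪g X := RelEmbedding.trans
    ⟨Fin.castLEEmb (by omega), by simp [pathGraph_adj]⟩ f
  have hg (j : Fin (k.val + 1)) : X.Adj w (g j) ↔ (cycleGraph (k.val + 2)).Adj 0 j.succ := by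
    rw [cycleGraph_adj_zero_succ]
    constructor
    · intro hj
      by_contra! hj'
      have hkj : k.val ≤ j.val := hmin (y := Fin.castLE (by omega) j)
        ⟨hj, fun h => hj'.1 (congrArg Fin.val h)⟩ (Nat.lt_succ_iff.1 j.isLt)
      omega
    · rintro (hj | hj)
      · rwa [show g j = f 0 from congrArg f (Fin.ext hj)]
      · rwa [show g j = f k from congrArg f (Fin.ext hj)]
  obtain ⟨e⟩ := nonempty_embedding_of_comap_succ_eq (comap_succ_cycleGraph k.val) g
    (fun ⟨j, hj⟩ => hw ⟨_, hj⟩) hg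
  exact (hch (k.val + 2) (by omega)).false e

theorem exists_adj_not_adj_of_ncard_eq [Finite V] {u v x : V}
    (h : (X.neighborSet u).ncard = (X.neighborSet v).ncard) (hvx : X.Adj v x)
    (hux : ¬ X.Adj u x) : ∃ w, X.Adj u w ∧ ¬ X.Adj v w := by
  by_contra! hsub
  have heq : X.neighborSet u = X.neighborSet v := Set.eq_of_subset_of_ncard_le hsub h.ge
  exact hux (heq.symm ▸ hvx : x ∈ X.neighborSet u)

variable [Finite V]

theorem NoLongInducedCycle.nonempty_pathGraph_succ_embedding (hch : NoLongInducedCycle X)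
    (c : X.Coloring Bool)
    (hdeg : ∀ u v x, X.Adj u x → X.Adj v x → (X.neighborSet u).ncard = (X.neighborSet v).ncard)
    {n : ℕ} (f : pathGraph (n + 4) ↪g X) : Nonempty (pathGraph (n + 5) ↪g X) := by
  have hadj (i j : Fin (n + 4)) : X.Adj (f i) (f j) ↔ i.val + 1 = j.val ∨ j.val + 1 = i.val :=
    f.map_rel_iff.trans pathGraph_adj
  have h03 : ¬ X.Adj (f 0) (f 3) := by
    rw [hadj, show ((3 : Fin (n + 4)) : ℕ) = 3 from rfl]
    simp
  have h21 : X.Adj (f 2) (f 1) := (hadj _ _).2 (.inr rfl)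
  obtain ⟨w, h0w, h2w⟩ : ∃ w, X.Adj (f 0) w ∧ ¬ X.Adj (f 2) w :=
    exists_adj_not_adj_of_ncard_eq (hdeg _ _ (f 1) ((hadj _ _).2 (.inl rfl)) h21)
      ((hadj 2 3).2 (.inl rfl)) h03
  have hw : w ∉ Set.range f := by
    rintro ⟨i, rfl⟩
    have hi : i = 1 := Fin.ext (by simpa [hadj, eq_comm] using h0w)
    exact h2w (hi ▸ h21)
  refine nonempty_embedding_of_comap_succ_eq (comap_succ_pathGraph _) f hw fun i => ?_
  rw [hch.adj_iff_eq_zero_of_pathGraph_embedding c f hw h0w.symm (mt Adj.symm h2w),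
    pathGraph_adj]
  simp only [Fin.ext_iff, Fin.val_succ, Fin.coe_ofNat_eq_mod, Nat.zero_mod]
  omega

theorem NoLongInducedCycle.isEmpty_pathGraph_four_embedding (hch : NoLongInducedCycle X)
    (c : X.Coloring Bool)
    (hdeg : ∀ u v x, X.Adj u x → X.Adj v x → (X.neighborSet u).ncard = (X.neighborSet v).ncard) :
    IsEmpty (pathGraph 4 ↪g X) := by
  refine ⟨fun f => ?_⟩
  have hpaths : ∀ n, Nonempty (pathGraph (n + 4) ↪g X) := fun n => by
    induction n with
    | zero => exact ⟨f⟩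
    | succ n ih => exact ih.elim (hch.nonempty_pathGraph_succ_embedding c hdeg)
  obtain ⟨g⟩ := hpaths (Nat.card V)
  have := Nat.card_le_card_of_injective g g.injective
  simp at this

theorem NoLongInducedCycle.adj_of_adj_of_adj_of_adj (hch : NoLongInducedCycle X)
    (c : X.Coloring Bool)
    (hdeg : ∀ u v x, X.Adj u x → X.Adj v x → (X.neighborSet u).ncard = (X.neighborSet v).ncard)
    {u v x y : V} (hux : X.Adj u x) (hvx : X.Adj v x) (huy : X.Adj u y) : X.Adj v y := by
  by_contra hvy
  have huv : ¬ X.Adj u v := fun h => c.valid h (coloring_eq_of_adj_of_adj c hux hvx)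
  have hxy : ¬ X.Adj x y := fun h => c.valid h (coloring_eq_of_adj_of_adj c hux.symm huy.symm)
  let f : Fin 4 → V := ![y, u, x, v]
  have hf : ∀ i j, X.Adj (f i) (f j) ↔ (pathGraph 4).Adj i j := fun i j => by
    fin_cases i <;> fin_cases j <;> simp [f, pathGraph_adj, hux, hux.symm, hvx, hvx.symm, huy,
      huy.symm, huv, mt Adj.symm huv, hxy, mt Adj.symm hxy, hvy, mt Adj.symm hvy]
  have htwin : ∀ i j : Fin 4, (∀ k, (pathGraph 4).Adj i k ↔ (pathGraph 4).Adj j k) → i = j := by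
    simp only [pathGraph_adj]
    decide
  exact (nonempty_embedding_of_adj_iff htwin hf).elim
    (hch.isEmpty_pathGraph_four_embedding c hdeg).false

end InducedPaths

section Classes

variable {V : Type*} {X : SimpleGraph V} {Δ Γ Λ : Set V}

theorem numClasses_pos (hfin : Δ.Finite) (hne : Δ.Nonempty) : 0 < numClasses X Δ Γ :=
  (Set.ncard_pos (hfin.image _)).2 (hne.image _)

theorem numClasses_lt_of_eRel_ssubset (hfin : Δ.Finite) (h : eRel X Δ Γ ⊂ eRel X Δ Λ) :
    numClasses X Δ Λ < numClasses X Δ Γ := by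
  have hfactors : Function.FactorsThrough (fun δ : Δ => X.neighborSet δ ∩ Λ)
      (fun δ : Δ => X.neighborSet δ ∩ Γ) :=
    fun δ ε hδε => (h.subset (show (δ.1, ε.1) ∈ eRel X Δ Γ from ⟨δ.2, ε.2, hδε⟩)).2.2
  obtain ⟨φ, hφ⟩ := (Function.factorsThrough_iff _).1 hfactors
  have hφ' {δ : V} (hδ : δ ∈ Δ) : X.neighborSet δ ∩ Λ = φ (X.neighborSet δ ∩ Γ) :=
    congrFun hφ ⟨δ, hδ⟩
  obtain ⟨⟨u, v⟩, ⟨hu, hv, huv⟩, hnot⟩ := Set.exists_of_ssubset h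
  have hfin' := hfin.image fun δ => X.neighborSet δ ∩ Γ
  rw [numClasses, Set.image_congr fun δ => hφ', ← Set.image_image φ]
  refine (Set.ncard_image_le hfin').lt_of_ne fun heq => hnot ⟨hu, hv, ?_⟩
  exact (Set.ncard_image_iff hfin').1 heq (Set.mem_image_of_mem _ hu) (Set.mem_image_of_mem _ hv)
    ((hφ' hu).symm.trans (huv.trans (hφ' hv)))

theorem exists_injective_of_le_numClasses (hfin : Δ.Finite) {n : ℕ} (h : n ≤ numClasses X Δ Γ) :
    ∃ y : Fin n → V, (∀ i, y i ∈ Δ) ∧ Function.Injective fun i => X.neighborSet (y i) ∩ Γ := by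
  obtain ⟨t, ht, htn⟩ := Set.exists_subset_card_eq h
  have := ((hfin.image _).subset ht).to_subtype
  choose y hy hyt using fun i => ht ((Finite.equivFinOfCardEq htn).symm i).2
  refine ⟨y, hy, ?_⟩
  simp only [hyt]
  exact Subtype.val_injective.comp (Equiv.injective _)

end Classes

namespace CoherentConfiguration

variable {Ω : Type*} (C : CoherentConfiguration Ω)

/-- The basic relation of the configuration which contains the pair `p`. -/
noncomputable def color (p : Ω × Ω) : Set (Ω × Ω) :=
  (C.partition p).choose

/-- The diagonal basic relation at `v`; two points lie in the same fiber if and only if their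
vertex colors agree. -/
noncomputable def vertexColor (v : Ω) : Set (Ω × Ω) :=
  C.color (v, v)

theorem color_mem (p : Ω × Ω) : C.color p ∈ C.S :=
  (C.partition p).choose_spec.1.1

theorem mem_color (p : Ω × Ω) : p ∈ C.color p :=
  (C.partition p).choose_spec.1.2

variable {C}

theorem color_eq_iff {s : Set (Ω × Ω)} (hs : s ∈ C.S) {p : Ω × Ω} : C.color p = s ↔ p ∈ s :=
  ⟨fun h => h ▸ C.mem_color p,
    fun h => (C.partition p).unique ⟨C.color_mem p, C.mem_color p⟩ ⟨hs, h⟩⟩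

theorem IsFiber.vertexColor_eq_iff {Δ : Set Ω} (hΔ : C.IsFiber Δ) {v : Ω} :
    C.vertexColor v = {p | p.1 = p.2 ∧ p.1 ∈ Δ} ↔ v ∈ Δ := by
  simp [vertexColor, color_eq_iff hΔ]

theorem IsFiber.vertexColor_eq {Δ : Set Ω} (hΔ : C.IsFiber Δ) {u v : Ω} (hu : u ∈ Δ)
    (hv : v ∈ Δ) : C.vertexColor u = C.vertexColor v :=
  (hΔ.vertexColor_eq_iff.2 hu).trans (hΔ.vertexColor_eq_iff.2 hv).symm

theorem IsFiber.mem_of_vertexColor_eq {Δ : Set Ω} (hΔ : C.IsFiber Δ) {u v : Ω} (hu : u ∈ Δ)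
    (h : C.vertexColor v = C.vertexColor u) : v ∈ Δ :=
  hΔ.vertexColor_eq_iff.1 (h.trans (hΔ.vertexColor_eq_iff.2 hu))

theorem Distinguished.eq_of_vertexColor_eq {α v : Ω} (hα : C.Distinguished α)
    (h : C.vertexColor v = C.vertexColor α) : v = α := by
  have hv : (v, v) ∈ ({(α, α)} : Set (Ω × Ω)) :=
    (color_eq_iff hα).1 (h.trans ((color_eq_iff hα).2 rfl))
  simpa using hv

theorem Compatible.adj_of_color_eq {X : SimpleGraph Ω} (hcomp : C.Compatible X) {p q : Ω × Ω}
    (h : C.color p = C.color q) (hp : X.Adj p.1 p.2) : X.Adj q.1 q.2 :=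
  hcomp _ (C.color_mem p) ⟨p, C.mem_color p, hp⟩ q (h ▸ C.mem_color q)

variable [Finite Ω]

theorem vertexColor_snd_eq_of_color_eq {p q : Ω × Ω} (h : C.color p = C.color q) :
    C.vertexColor p.2 = C.vertexColor q.2 := by
  have hreg := C.regularity _ (C.color_mem p) _ (C.color_mem (p.2, p.2)) _ (C.color_mem p)
    p (C.mem_color p) q (h ▸ C.mem_color q)
  have hpos : 0 < {γ | (p.1, γ) ∈ C.color p ∧ (γ, p.2) ∈ C.color (p.2, p.2)}.ncard :=
    (Set.ncard_pos).2 ⟨p.2, C.mem_color p, C.mem_color (p.2, p.2)⟩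
  rw [hreg, Set.ncard_pos] at hpos
  obtain ⟨γ, -, hγ⟩ := hpos
  obtain rfl : γ = q.2 :=
    C.diag_union _ (C.color_mem (p.2, p.2)) ⟨_, C.mem_color (p.2, p.2), rfl⟩ _ hγ
  exact ((color_eq_iff (C.color_mem (p.2, p.2))).2 hγ).symm

theorem exists_perm_color_eq {u v : Ω} (h : C.vertexColor u = C.vertexColor v) :
    ∃ e : Equiv.Perm Ω, ∀ w, C.color (v, e w) = C.color (u, w) := by
  have hfiber : ∀ s, Nonempty ({w // C.color (u, w) = s} ≃ {w // C.color (v, w) = s}) := by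
    intro s
    by_cases hs : s ∈ C.S
    · have hv : (v, v) ∈ C.color (u, u) := (color_eq_iff (C.color_mem _)).1 h.symm
      have hreg := C.regularity s hs _ (C.converse_mem s hs) _ (C.color_mem (u, u))
        (u, u) (C.mem_color _) (v, v) hv
      simp only [Set.mem_ofPred_eq, and_self] at hreg
      simp only [color_eq_iff hs]
      exact Finite.card_eq.1 hreg
    · have hempty : ∀ t : Ω, IsEmpty {w // C.color (t, w) = s} :=
        fun t => ⟨fun w => hs (w.2 ▸ C.color_mem _)⟩
      have := hempty u
      have := hempty v
      exact ⟨Equiv.equivOfIsEmpty _ _⟩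
  let e := fun s => (hfiber s).some
  exact ⟨Equiv.ofFiberEquiv e, Equiv.ofFiberEquiv_map e⟩

namespace Compatible

variable {X : SimpleGraph Ω}

theorem exists_perm_adj_iff (hcomp : C.Compatible X) {u v : Ω}
    (h : C.vertexColor u = C.vertexColor v) :
    ∃ e : Equiv.Perm Ω, ∀ w, (X.Adj v (e w) ↔ X.Adj u w) ∧
      C.vertexColor (e w) = C.vertexColor w := by
  obtain ⟨e, he⟩ := exists_perm_color_eq h
  exact ⟨e, fun w => ⟨⟨hcomp.adj_of_color_eq (he w), hcomp.adj_of_color_eq (he w).symm⟩,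
    vertexColor_snd_eq_of_color_eq (he w)⟩⟩

theorem exists_walk_length_eq (hcomp : C.Compatible X) {α u v : Ω} (hα : C.Distinguished α)
    (p : X.Walk u α) (h : C.vertexColor u = C.vertexColor v) :
    ∃ q : X.Walk v α, q.length = p.length := by
  induction p generalizing v with
  | nil =>
    obtain rfl := hα.eq_of_vertexColor_eq h.symm
    exact ⟨.nil, rfl⟩
  | @cons _ w _ huw p ih =>
    obtain ⟨e, he⟩ := hcomp.exists_perm_adj_iff h
    obtain ⟨q, hq⟩ := ih hα (he w).2.symm
    exact ⟨.cons ((he w).1.2 huw) q, by simp [hq]⟩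

theorem dist_eq_of_vertexColor_eq (hcomp : C.Compatible X) (hconn : X.Connected) {α u v : Ω}
    (hα : C.Distinguished α) (h : C.vertexColor u = C.vertexColor v) :
    X.dist α u = X.dist α v := by
  have hle {u v : Ω} (h : C.vertexColor u = C.vertexColor v) : X.dist α v ≤ X.dist α u := by
    obtain ⟨p, hp⟩ := hconn.exists_walk_length_eq_dist u α
    obtain ⟨q, hq⟩ := hcomp.exists_walk_length_eq hα p h
    rw [dist_comm, dist_comm (u := α), ← hp, ← hq]
    exact dist_le q
  exact le_antisymm (hle h.symm) (hle h)

theorem vertexColor_ne_of_adj (hcomp : C.Compatible X) (hconn : X.Connected)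
    (c : X.Coloring Bool) {α u v : Ω} (hα : C.Distinguished α) (huv : X.Adj u v) :
    C.vertexColor u ≠ C.vertexColor v := fun h => by
  have := hcomp.dist_eq_of_vertexColor_eq hconn hα h
  have := dist_eq_dist_add_one_of_adj c hconn α huv
  omega

theorem ncard_neighborSet_induce_eq (hcomp : C.Compatible X) {F : Set (Set (Ω × Ω))}
    {u v : C.vertexColor ⁻¹' F} (h : C.vertexColor u = C.vertexColor v) :
    ((X.induce (C.vertexColor ⁻¹' F)).neighborSet u).ncard =
      ((X.induce (C.vertexColor ⁻¹' F)).neighborSet v).ncard := by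
  obtain ⟨e, he⟩ := hcomp.exists_perm_adj_iff h
  have hmem {w : Ω} : C.vertexColor (e w) ∈ F ↔ C.vertexColor w ∈ F := by rw [(he w).2]
  refine Set.ncard_congr (fun w _ => ⟨e w, hmem.2 w.2⟩) (fun w hw => (he w).1.2 hw)
    (by simp [Subtype.ext_iff]) fun w hw => ?_
  have hew : e (e.symm w) = w := e.apply_symm_apply w
  have hvw : X.Adj v (e (e.symm w)) := by rwa [hew]
  exact ⟨⟨e.symm w, hmem.1 (by rw [hew]; exact w.2)⟩, (he _).1.1 hvw, Subtype.ext hew⟩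

theorem adj_of_adj_of_adj_of_adj (hcomp : C.Compatible X) (hconn : X.Connected)
    (c : X.Coloring Bool) (hch : NoLongInducedCycle X) {α : Ω} (hα : C.Distinguished α)
    {u v x y : Ω} (huv : C.vertexColor u = C.vertexColor v)
    (hxy : C.vertexColor x = C.vertexColor y)
    (hux : X.Adj u x) (hvx : X.Adj v x) (huy : X.Adj u y) : X.Adj v y := by
  let T : Set Ω := C.vertexColor ⁻¹' {C.vertexColor u, C.vertexColor x}
  have hdeg : ∀ a b z : T, X.Adj a z → X.Adj b z →
      ((X.induce T).neighborSet a).ncard = ((X.induce T).neighborSet b).ncard := by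
    intro a b z haz hbz
    have hne₁ := hcomp.vertexColor_ne_of_adj hconn c hα haz
    have hne₂ := hcomp.vertexColor_ne_of_adj hconn c hα hbz
    refine hcomp.ncard_neighborSet_induce_eq ?_
    rcases a.2 with ha | ha <;> rcases b.2 with hb | hb <;> rcases z.2 with hz | hz <;> grind
  have hu : u ∈ T := .inl rfl
  have hv : v ∈ T := .inl huv.symm
  have hx : x ∈ T := .inr rfl
  have hy : y ∈ T := .inr hxy.symm
  exact (hch.of_embedding (Embedding.induce T)).adj_of_adj_of_adj_of_adj (X := X.induce T)
    (c.comp (Embedding.induce T).toHom) hdeg (u := ⟨u, hu⟩) (v := ⟨v, hv⟩) (x := ⟨x, hx⟩)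
    (y := ⟨y, hy⟩) hux hvx huy

theorem false_of_induced_matching_layers (hcomp : C.Compatible X) (hconn : X.Connected)
    (c : X.Coloring Bool) (hch : NoLongInducedCycle X) (hT2 : T2Free X) {α : Ω}
    (hα : C.Distinguished α) {d : ℕ} {y g : Fin 3 → Ω}
    (hy : ∀ i j, C.vertexColor (y i) = C.vertexColor (y j))
    (hyg : ∀ i j, X.Adj (y i) (g j) ↔ i = j)
    (hdy : ∀ i, X.dist α (y i) = d) (hdg : ∀ i, X.dist α (g i) = d + 1) : False := by
  induction d generalizing y g with
  | zero =>
    have hy01 : y 0 = y 1 :=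
      (hconn.dist_eq_zero_iff.1 (hdy 0)).symm.trans (hconn.dist_eq_zero_iff.1 (hdy 1))
    exact absurd ((hyg 1 0).1 (hy01 ▸ (hyg 0 0).2 rfl)) (by decide)
  | succ d ih =>
    obtain ⟨w, hyw, hdw⟩ := exists_adj_dist_eq_of_dist_eq_add_one hconn (hdy 0)
    choose e he using fun i => hcomp.exists_perm_adj_iff (hy 0 i)
    let x : Fin 3 → Ω := fun i => e i w
    have hxy : ∀ i, X.Adj (x i) (y i) := fun i => ((he i w).1.2 hyw).symm
    have hx : ∀ i j, C.vertexColor (x i) = C.vertexColor (x j) :=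
      fun i j => (he i w).2.trans (he j w).2.symm
    have hdx : ∀ i, X.dist α (x i) = d := fun i =>
      (hcomp.dist_eq_of_vertexColor_eq hconn hα (he i w).2).trans hdw
    refine ih hx (fun t i => ⟨fun hti => ?_, fun h => h ▸ hxy t⟩) hdx hdy
    by_contra hne
    obtain ⟨k, hk⟩ := hT2.exists_not_adj c hyg (x t)
    refine hk ?_
    have htwin {i : Fin 3} (hki : X.Adj (x k) (y i)) (hti : X.Adj (x t) (y i)) :
        X.Adj (x t) (y k) :=
      hcomp.adj_of_adj_of_adj_of_adj hconn c hch hα (hx k t) (hy i k) hki hti (hxy k)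
    rcases hT2.adj_or_adj_of_dist_eq c hconn ((hdx k).trans (hdx t).symm)
      (by rw [hdg, hdx]) (by rw [hdg, hdx]) hti (hxy t) ((hyg i i).2 rfl) ((hyg t t).2 rfl)
      (mt (hyg i t).1 (Ne.symm hne)) (mt (hyg t i).1 hne) with h | h
    exacts [htwin h hti, htwin h (hxy t)]

theorem false_of_induced_matching (hcomp : C.Compatible X) (hconn : X.Connected)
    (c : X.Coloring Bool) (hch : NoLongInducedCycle X) (hT2 : T2Free X) {α : Ω}
    (hα : C.Distinguished α) {y g : Fin 3 → Ω}
    (hy : ∀ i j, C.vertexColor (y i) = C.vertexColor (y j))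
    (hg : ∀ i j, C.vertexColor (g i) = C.vertexColor (g j))
    (hyg : ∀ i j, X.Adj (y i) (g j) ↔ i = j) : False := by
  have hdy := fun i => hcomp.dist_eq_of_vertexColor_eq hconn hα (hy i 0)
  have hdg := fun i => hcomp.dist_eq_of_vertexColor_eq hconn hα (hg i 0)
  rcases dist_eq_dist_add_one_of_adj c hconn α ((hyg 0 0).2 rfl) with h | h
  · exact hcomp.false_of_induced_matching_layers hconn c hch hT2 hα hy hyg hdy
      fun i => (hdg i).trans h
  · exact hcomp.false_of_induced_matching_layers hconn c hch hT2 hα hg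
      (fun i j => by rw [X.adj_comm, hyg, eq_comm]) hdg fun i => (hdy i).trans h

theorem neighborSet_inter_eq_of_adj_of_adj (hcomp : C.Compatible X) (hconn : X.Connected)
    (c : X.Coloring Bool) (hch : NoLongInducedCycle X) {α : Ω} (hα : C.Distinguished α)
    {Δ Γ : Set Ω} (hΔ : C.IsFiber Δ) (hΓ : C.IsFiber Γ) {u v x : Ω} (hu : u ∈ Δ) (hv : v ∈ Δ)
    (hx : x ∈ Γ) (hux : X.Adj u x) (hvx : X.Adj v x) :
    X.neighborSet u ∩ Γ = X.neighborSet v ∩ Γ := by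
  have hsub {u v : Ω} (hu : u ∈ Δ) (hv : v ∈ Δ) (hux : X.Adj u x) (hvx : X.Adj v x) :
      X.neighborSet u ∩ Γ ⊆ X.neighborSet v ∩ Γ := fun y hy =>
    ⟨hcomp.adj_of_adj_of_adj_of_adj hconn c hch hα (hΔ.vertexColor_eq hu hv)
      (hΓ.vertexColor_eq hx hy.2) hux hvx hy.1, hy.2⟩
  exact (hsub hu hv hux hvx).antisymm (hsub hv hu hvx hux)

theorem numClasses_le_two (hcomp : C.Compatible X) (hconn : X.Connected)
    (c : X.Coloring Bool) (hch : NoLongInducedCycle X) (hT2 : T2Free X) {α : Ω}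
    (hα : C.Distinguished α) {Δ Γ : Set Ω} (hΔ : C.IsFiber Δ) (hΓ : C.IsFiber Γ) :
    numClasses X Δ Γ ≤ 2 := by
  by_contra! hlt
  obtain ⟨y, hyΔ, hyinj⟩ := exists_injective_of_le_numClasses Δ.toFinite hlt
  obtain ⟨k, v, hkv, hvΓ⟩ : ∃ k, (X.neighborSet (y k) ∩ Γ).Nonempty := by
    by_contra! hempty
    exact absurd (hyinj ((hempty 0).trans (hempty 1).symm)) (by decide)
  choose e he using fun i => hcomp.exists_perm_adj_iff (hΔ.vertexColor_eq (hyΔ k) (hyΔ i))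
  let g : Fin 3 → Ω := fun i => e i v
  have hgΓ : ∀ i, g i ∈ Γ := fun i => hΓ.mem_of_vertexColor_eq hvΓ (he i v).2
  have hyg : ∀ i, X.Adj (y i) (g i) := fun i => (he i v).1.2 hkv
  refine hcomp.false_of_induced_matching hconn c hch hT2 hα
    (fun i j => hΔ.vertexColor_eq (hyΔ i) (hyΔ j)) (fun i j => hΓ.vertexColor_eq (hgΓ i) (hgΓ j))
    fun i j => ⟨fun hij => hyinj ?_, fun h => h ▸ hyg i⟩
  exact hcomp.neighborSet_inter_eq_of_adj_of_adj hconn c hch hα hΔ hΓ (hyΔ i) (hyΔ j) (hgΓ j) hij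
    (hyg j)

end Compatible

end CoherentConfiguration

theorem stmt_11_general {Ω : Type*} [Finite Ω] (X : SimpleGraph Ω) (P Q : Set Ω)
    (hconn : X.Connected) (hbip : IsBipartition X P Q) (hchordal : NoLongInducedCycle X)
    (hT2 : T2Free X)
    (α : Ω) (C : CoherentConfiguration Ω)
    (hcomp : C.Compatible X) (hdist : C.Distinguished α)
    (Δ Γ Λ : Set Ω) (hΔ : C.IsFiber Δ) (hΓ : C.IsFiber Γ)
    (hstrict : eRel X Δ Γ ⊂ eRel X Δ Λ) :
    numClasses X Δ Γ = 2 * numClasses X Δ Λ := by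
  obtain ⟨p, ⟨hp, -⟩, -⟩ := Set.exists_of_ssubset hstrict
  have hle := hcomp.numClasses_le_two hconn hbip.coloring hchordal hT2 hdist hΔ hΓ
  have hlt := numClasses_lt_of_eRel_ssubset Δ.toFinite hstrict
  have hpos : 0 < numClasses X Δ Λ := numClasses_pos Δ.toFinite ⟨_, hp⟩
  omega

theorem stmt_11 {Ω : Type*} [Fintype Ω] (X : SimpleGraph Ω) (P Q : Set Ω)
    (hconn : X.Connected) (hbip : IsBipartition X P Q) (hchordal : NoLongInducedCycle X)
    (hT2 : T2Free X)
    (α : Ω) (C : CoherentConfiguration Ω)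
    (hcomp : C.Compatible X) (hdist : C.Distinguished α)
    (Δ Γ Λ : Set Ω) (hΔ : C.IsFiber Δ) (hΓ : C.IsFiber Γ) (hΛ : C.IsFiber Λ)
    (hΔΓ : Δ ≠ Γ) (hΔΛ : Δ ≠ Λ) (hΓΛ : Γ ≠ Λ)
    (hedge : ∃ u ∈ Δ, ∃ v ∈ Γ, X.Adj u v)
    (hstrict : eRel X Δ Γ ⊂ eRel X Δ Λ) :
    numClasses X Δ Γ = 2 * numClasses X Δ Λ :=
  stmt_11_general X P Q hconn hbip hchordal hT2 α C hcomp hdist Δ Γ Λ hΔ hΓ hstrict
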